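/- arXiv:2101.09032 — 2 statements merged into one kernel-verified Lean document; each statement's English description precedes it below -/
import Mathlib

section
/- If a trace τ over (T,X,V) is PC, then its split trace τ_split is PC. (Lemma 1 of the paper, case X = PC.) -/
open scoped Classical

/-- A trace over `(T, X, V)`: transactions `T`, shared variables `X`, values `V`.
Each transaction has a read set `RS` with read values `rdval`, a write set `WS`
with last-written values `wrval`; there is an initial transaction `t0`, a
program order `po`, per-variable read-from relations `rf x` and per-variable
store orders `sto x`. -/
structure TxnTrace (T X V : Type*) where
  RS : T → Set X
  WS : T → Set X
  rdval : T → X → V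
  wrval : T → X → V
  t0 : T
  po : T → T → Prop
  rf : X → T → T → Prop
  sto : X → T → T → Prop

/-- a strict partial order: irreflexive and transitive binary relation -/
def StrictPartialRel {α : Type*} (r : α → α → Prop) : Prop :=
  (∀ a, ¬ r a a) ∧ ∀ a b c, r a b → r b c → r a c

/-- a strict total order -/
def StrictTotalRel {α : Type*} (r : α → α → Prop) : Prop :=
  StrictPartialRel r ∧ ∀ a b, a ≠ b → r a b ∨ r b a

/-- axiom Prefix: `arb ; vis ⊆ vis` -/
def PrefixAx {α : Type*} (vis arb : α → α → Prop) : Prop :=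
  ∀ a b c, arb a b → vis b c → vis a c

/-- `vis` is a strict partial order, `arb` a strict total order, `vis ⊆ arb` -/
def GoodPair {α : Type*} (vis arb : α → α → Prop) : Prop :=
  StrictPartialRel vis ∧ StrictTotalRel arb ∧ ∀ a b, vis a b → arb a b

namespace TxnTrace

variable {T X V : Type*} (τ : TxnTrace T X V)

/-- the well-formedness conditions of a trace -/
structure WellFormed : Prop where
  rs_init : τ.RS τ.t0 = ∅
  ws_init : τ.WS τ.t0 = Set.univ
  po_irrefl : ∀ t, ¬ τ.po t t
  po_trans : ∀ a b c, τ.po a b → τ.po b c → τ.po a c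
  po_init : ∀ t, t ≠ τ.t0 → τ.po τ.t0 t
  rf_wf : ∀ x t' t, τ.rf x t' t →
    t' ≠ t ∧ x ∈ τ.RS t ∧ x ∈ τ.WS t' ∧ τ.wrval t' x = τ.rdval t x
  rf_total : ∀ t x, x ∈ τ.RS t → ∃! t', τ.rf x t' t
  sto_dom : ∀ x a b, τ.sto x a b → x ∈ τ.WS a ∧ x ∈ τ.WS b
  sto_irrefl : ∀ x a, ¬ τ.sto x a a
  sto_trans : ∀ x a b c, τ.sto x a b → τ.sto x b c → τ.sto x a c
  sto_total : ∀ x a b, x ∈ τ.WS a → x ∈ τ.WS b → a ≠ b → τ.sto x a b ∨ τ.sto x b a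

/-- `rf = ⋃ x, rf x` -/
def rfR (a b : T) : Prop := ∃ x, τ.rf x a b

/-- `sto = ⋃ x, sto x` -/
def stoR (a b : T) : Prop := ∃ x, τ.sto x a b

/-- the conflict relation: `(t1,t3) ∈ cf` iff `t1 ≠ t3` and there are `x`, `t2`
with `(t2,t1) ∈ rf_x` and `(t2,t3) ∈ sto_x` -/
def cf (a b : T) : Prop := a ≠ b ∧ ∃ x w, τ.rf x w a ∧ τ.sto x w b

/-- `vis0 = po ∪ rf` -/
def vis0 (a b : T) : Prop := τ.po a b ∨ τ.rfR a b

/-- `arb0 = po ∪ rf ∪ sto` -/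
def arb0 (a b : T) : Prop := τ.po a b ∨ τ.rfR a b ∨ τ.stoR a b

/-- happens-before: `(po ∪ rf ∪ sto ∪ cf)⁺` -/
def hb : T → T → Prop := Relation.TransGen (fun a b => τ.arb0 a b ∨ τ.cf a b)

/-- axiom PoCo: `vis0⁺ ⊆ vis` -/
def PoCo (vis : T → T → Prop) : Prop := ∀ a b, Relation.TransGen τ.vis0 a b → vis a b

/-- axiom CoArb: `arb0⁺ ⊆ arb` -/
def CoArb (arb : T → T → Prop) : Prop := ∀ a b, Relation.TransGen τ.arb0 a b → arb a b

/-- axiom RetVal: every read of `x` in `t` reads from the `arb`-greatest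
`vis`-predecessor of `t` writing `x` -/
def RetVal (vis arb : T → T → Prop) : Prop :=
  ∀ t x, x ∈ τ.RS t → ∃ t00,
    (vis t00 t ∧ x ∈ τ.WS t00) ∧
    (∀ t', vis t' t → x ∈ τ.WS t' → t' ≠ t00 → arb t' t00) ∧
    τ.rf x t00 t


/-- axiom Conflict: `sto ⊆ vis` -/
def ConflictAx (vis : T → T → Prop) : Prop := ∀ a b, τ.stoR a b → vis a b


/-- causal consistency -/
def IsCC : Prop :=
  ∃ vis arb, GoodPair vis arb ∧ τ.PoCo vis ∧ τ.CoArb arb ∧ τ.RetVal vis arb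

/-- prefix consistency -/
def IsPC : Prop :=
  ∃ vis arb, GoodPair vis arb ∧ τ.PoCo vis ∧ τ.CoArb arb ∧ τ.RetVal vis arb ∧
    PrefixAx vis arb

/-- snapshot isolation -/
def IsSI : Prop :=
  ∃ vis arb, GoodPair vis arb ∧ τ.PoCo vis ∧ τ.CoArb arb ∧ τ.RetVal vis arb ∧
    PrefixAx vis arb ∧ τ.ConflictAx vis

/-- serializability: some strict total order `arb` with `arb0⁺ ⊆ arb` satisfies
RetVal with `vis = arb` -/
def IsSER : Prop :=
  ∃ arb, StrictTotalRel arb ∧ τ.CoArb arb ∧ τ.RetVal arb arb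

/-- the read part `t_rd` of a transaction in the split trace -/
def rdPart (t : T) : T × Bool := (t, false)

/-- the write part `t_wr` of a transaction in the split trace;
the initial transaction `t0` is kept unchanged and plays both roles -/
noncomputable def wrPart (t : T) : T × Bool := if t = τ.t0 then (t, false) else (t, true)

/-- the split trace `τ_split`: every transaction `t ≠ t0` is split into a read
part `t_rd` and a write part `t_wr`; `po'` is the smallest transitive relation
containing `(t_rd, t_wr)` for every split `t` and `(u_wr, v_rd)` for `(u,v) ∈ po`;
`rf'_x = {(u_wr, v_rd) : (u,v) ∈ rf_x}`; `sto'_x = {(u_wr, v_wr) : (u,v) ∈ sto_x}`.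
(The pair `(t0, true)` is an unused dummy element with empty read and write sets and
no incident relations.) -/
noncomputable def split : TxnTrace (T × Bool) X V where
  RS p := if p = rdPart p.1 then τ.RS p.1 else ∅
  WS p := if p = τ.wrPart p.1 then τ.WS p.1 else ∅
  rdval p x := τ.rdval p.1 x
  wrval p x := τ.wrval p.1 x
  t0 := (τ.t0, false)
  po := Relation.TransGen (fun a b =>
    (∃ t, t ≠ τ.t0 ∧ a = rdPart t ∧ b = τ.wrPart t) ∨
    (∃ u v, τ.po u v ∧ a = τ.wrPart u ∧ b = rdPart v))
  rf := fun x a b => ∃ u v, τ.rf x u v ∧ a = τ.wrPart u ∧ b = rdPart v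
  sto := fun x a b => ∃ u v, τ.sto x u v ∧ a = τ.wrPart u ∧ b = τ.wrPart v

end TxnTrace

/-! Read the arbitration order as a timeline. Under Prefix, the transactions visible to `t` form
an initial segment of it, so `t` behaves as if it took its snapshot at the end of that segment,
and it commits at its own place. Putting `t_rd` at the snapshot point and `t_wr` at the commit
point gives a single total order in which `u_wr` precedes `v_rd` exactly when `u` is visible to
`v`. Hence every read part sees the same writers as before, now as *all* earlier writers: the
split trace is even serializable, and serializability implies prefix consistency. -/

theorem StrictTotalRel.isStrictTotalOrder {α : Type*} {r : α → α → Prop} (h : StrictTotalRel r) :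
    IsStrictTotalOrder α r where
  irrefl := h.1.1
  trans := h.1.2
  trichotomous a b hab hba := by_contra fun hne => (h.2 a b hne).elim hab hba

theorem strictTotalRel_preimage_lt {α β : Type*} [LinearOrder β] {f : α → β}
    (hf : Function.Injective f) : StrictTotalRel (f ⁻¹'o (· < ·)) :=
  ⟨⟨fun _ => lt_irrefl _, fun _ _ _ => lt_trans⟩, fun _ _ hne => lt_or_gt_of_ne (hf.ne hne)⟩

theorem lowerSet_Iio_lt_iff {α : Type*} [LinearOrder α] {a : α} {s : LowerSet α} :
    LowerSet.Iio a < s ↔ a ∈ s := by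
  rw [← not_le, not_iff_comm]
  exact ⟨fun ha b hb => not_le.1 fun hab => ha (s.lower hab hb), fun h ha => lt_irrefl a (h ha)⟩

namespace TxnTrace

variable {T X V : Type*} (τ : TxnTrace T X V)

section Axioms

variable {τ} {vis arb : T → T → Prop}

theorem CoArb.poCo (h : τ.CoArb arb) : τ.PoCo arb := fun a b hab =>
  h a b (Relation.TransGen.mono (fun _ _ => Or.imp_right Or.inl) a b hab)

theorem PoCo.vis_of_vis0 (h : τ.PoCo vis) {a b : T} (hab : τ.vis0 a b) : vis a b :=
  h a b (.single hab)

theorem CoArb.arb_of_stoR (h : τ.CoArb arb) {a b : T} (hab : τ.stoR a b) : arb a b :=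
  h a b (.single (.inr (.inr hab)))

theorem IsSER.isPC (h : τ.IsSER) : τ.IsPC :=
  let ⟨arb, harb, hco, hret⟩ := h
  ⟨arb, arb, ⟨harb.1, harb, fun _ _ => id⟩, hco.poCo, hco, hret, harb.1.2⟩

end Axioms

section Split

variable {τ} {vis arb : T → T → Prop} {arb' : T × Bool → T × Bool → Prop}

theorem wrPart_of_ne {t : T} (ht : t ≠ τ.t0) : τ.wrPart t = (t, true) := if_neg ht

variable (τ) in
theorem wrPart_t0 : τ.wrPart τ.t0 = rdPart τ.t0 := if_pos rfl

variable (τ) in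
theorem wrPart_fst (t : T) : (τ.wrPart t).1 = t := by
  unfold wrPart
  split_ifs <;> rfl

theorem mem_split_RS {p : T × Bool} {x : X} :
    x ∈ τ.split.RS p ↔ ∃ t, p = rdPart t ∧ x ∈ τ.RS t := by
  constructor
  · intro hx
    by_cases hp : p = rdPart p.1
    · exact ⟨p.1, hp, by simpa only [split, if_pos hp] using hx⟩
    · simp only [split, if_neg hp, Set.mem_empty_iff_false] at hx
  · rintro ⟨t, rfl, hx⟩
    simpa only [split, rdPart, if_true] using hx

theorem mem_split_WS {p : T × Bool} {x : X} :
    x ∈ τ.split.WS p ↔ ∃ t, p = τ.wrPart t ∧ x ∈ τ.WS t := by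
  constructor
  · intro hx
    by_cases hp : p = τ.wrPart p.1
    · exact ⟨p.1, hp, by simpa only [split, if_pos hp] using hx⟩
    · simp only [split, if_neg hp, Set.mem_empty_iff_false] at hx
  · rintro ⟨t, rfl, hx⟩
    simpa only [split, wrPart_fst, if_true] using hx

theorem split_coArb [IsTrans (T × Bool) arb']
    (hrw : ∀ t, t ≠ τ.t0 → arb' (rdPart t) (τ.wrPart t))
    (hwr : ∀ u v, τ.vis0 u v → arb' (τ.wrPart u) (rdPart v))
    (hww : ∀ u v, τ.stoR u v → arb' (τ.wrPart u) (τ.wrPart v)) :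
    τ.split.CoArb arb' := by
  refine Relation.transGen_minimal ?_
  rintro a b (hpo | ⟨x, u, v, hrf, rfl, rfl⟩ | ⟨x, u, v, hsto, rfl, rfl⟩)
  · refine Relation.transGen_minimal ?_ a b hpo
    rintro _ _ (⟨t, ht, rfl, rfl⟩ | ⟨u, v, huv, rfl, rfl⟩)
    · exact hrw t ht
    · exact hwr u v (.inl huv)
  · exact hwr u v (.inr ⟨x, hrf⟩)
  · exact hww u v ⟨x, hsto⟩

theorem split_retVal (hret : τ.RetVal vis arb)
    (hwr : ∀ u v, arb' (τ.wrPart u) (rdPart v) ↔ vis u v)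
    (hww : ∀ u v, arb u v → arb' (τ.wrPart u) (τ.wrPart v)) :
    τ.split.RetVal arb' arb' := by
  intro p x hx
  obtain ⟨t, rfl, hxt⟩ := mem_split_RS.1 hx
  obtain ⟨w, ⟨hwt, hxw⟩, hmax, hrf⟩ := hret t x hxt
  refine ⟨τ.wrPart w, ⟨(hwr w t).2 hwt, mem_split_WS.2 ⟨w, rfl, hxw⟩⟩, ?_, w, t, hrf, rfl, rfl⟩
  intro q hqt hxq hqw
  obtain ⟨u, rfl, hxu⟩ := mem_split_WS.1 hxq
  exact hww u w (hmax u ((hwr u t).1 hqt) hxu fun huw => hqw (congrArg _ huw))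

end Split

section Timeline

variable [LinearOrder T]

/-- The position of a transaction part on the timeline `T`, when the transactions visible to `t` are
the lower set `past t`. A position is first of all the set of transactions committed before it:
`past t` for the read part and everything below `t` for the write part. On a tie read parts precede
write parts, and two parts of the same kind are ordered as in `T`. -/
def splitPos (past : T → LowerSet T) (p : T × Bool) : LowerSet T ×ₗ Bool ×ₗ T :=
  toLex (if p.2 then LowerSet.Iio p.1 else past p.1, toLex (p.2, p.1))

theorem splitPos_injective (past : T → LowerSet T) : Function.Injective (splitPos past) := by
  intro p q hpq
  have htail : (p.2, p.1) = (q.2, q.1) := toLex_inj.1 (Prod.ext_iff.1 (toLex_inj.1 hpq)).2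
  exact Prod.swap_injective htail

variable {τ} {past : T → LowerSet T} {t u v : T}

theorem splitPos_write_lt_read :
    splitPos past (u, true) < splitPos past (v, false) ↔ u ∈ past v := by
  simp [splitPos, Prod.Lex.toLex_lt_toLex, lowerSet_Iio_lt_iff]

theorem splitPos_write_lt_write (h : u < v) : splitPos past (u, true) < splitPos past (v, true) :=
  Prod.Lex.toLex_lt_toLex.2 (.inl (LowerSet.Iio_strictMono T h))

theorem splitPos_read_lt_write (h : past t ≤ LowerSet.Iio t) :
    splitPos past (t, false) < splitPos past (t, true) :=
  Prod.Lex.toLex_lt_toLex'.2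
    ⟨h, fun _ => Prod.Lex.toLex_lt_toLex.2 (.inl Bool.false_lt_true)⟩

theorem splitPos_wrPart_le (h : past u ≤ LowerSet.Iio u) :
    splitPos past (τ.wrPart u) ≤ splitPos past (u, true) := by
  by_cases hu : u = τ.t0
  · subst hu
    rw [wrPart_t0]
    exact (splitPos_read_lt_write h).le
  · rw [wrPart_of_ne hu]

theorem splitPos_rdPart_lt_wrPart (hpast : ∀ t, past t ≤ LowerSet.Iio t) (ht : t ≠ τ.t0) :
    splitPos past (rdPart t) < splitPos past (τ.wrPart t) := by
  rw [wrPart_of_ne ht]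
  exact splitPos_read_lt_write (hpast t)

theorem splitPos_wrPart_lt_rdPart (hpast : ∀ t, past t ≤ LowerSet.Iio t)
    (hinit : ∀ t, t ≠ τ.t0 → τ.t0 ∈ past t) :
    splitPos past (τ.wrPart u) < splitPos past (rdPart v) ↔ u ∈ past v := by
  refine ⟨fun h => ?_, fun h =>
    (splitPos_wrPart_le (hpast u)).trans_lt (splitPos_write_lt_read.2 h)⟩
  by_cases hu : u = τ.t0
  · subst hu
    rw [wrPart_t0] at h
    exact hinit v fun hv => h.ne' (congrArg (splitPos past ∘ rdPart) hv)
  · rw [wrPart_of_ne hu] at h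
    exact splitPos_write_lt_read.1 h

theorem splitPos_wrPart_lt_wrPart (hpast : ∀ t, past t ≤ LowerSet.Iio t)
    (hinit : ∀ t, t ≠ τ.t0 → τ.t0 ∈ past t) (h : u < v) :
    splitPos past (τ.wrPart u) < splitPos past (τ.wrPart v) := by
  have hv : v ≠ τ.t0 := by
    rintro rfl
    exact lt_asymm h (hpast u (hinit u h.ne))
  rw [wrPart_of_ne hv]
  exact (splitPos_wrPart_le (hpast u)).trans_lt (splitPos_write_lt_write h)

end Timeline

end TxnTrace

open TxnTrace in
theorem split_preserves_pc_general {T X V : Type*} (τ : TxnTrace T X V)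
    (hwf : τ.WellFormed) (h : τ.IsPC) : τ.split.IsSER := by
  obtain ⟨vis, arb, ⟨-, harb, hsub⟩, hpo, hco, hret, hprefix⟩ := h
  have := harb.isStrictTotalOrder
  let := linearOrderOfSTO arb
  have hlower (t : T) : IsLowerSet {u | vis u t} := fun u w hwu hut =>
    hwu.eq_or_lt.elim (fun h => h ▸ hut) fun h => hprefix w u t h hut
  let past (t : T) : LowerSet T := ⟨{u | vis u t}, hlower t⟩
  have hpast (t : T) : past t ≤ LowerSet.Iio t := fun u => hsub u t
  have hinit (t : T) (ht : t ≠ τ.t0) : τ.t0 ∈ past t := hpo.vis_of_vis0 (.inl (hwf.po_init t ht))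
  have hwr (u v : T) : (splitPos past ⁻¹'o (· < ·)) (τ.wrPart u) (rdPart v) ↔ vis u v :=
    splitPos_wrPart_lt_rdPart hpast hinit
  have hww (u v : T) (huv : arb u v) : (splitPos past ⁻¹'o (· < ·)) (τ.wrPart u) (τ.wrPart v) :=
    splitPos_wrPart_lt_wrPart hpast hinit huv
  exact ⟨splitPos past ⁻¹'o (· < ·), strictTotalRel_preimage_lt (splitPos_injective past),
    split_coArb (fun t => splitPos_rdPart_lt_wrPart hpast)
      (fun u v huv => (hwr u v).2 (hpo.vis_of_vis0 huv))
      (fun u v huv => hww u v (hco.arb_of_stoR huv)),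
    split_retVal hret hwr hww⟩

/-- Lemma 1, case PC: if a trace is PC then its split trace is PC. -/
theorem split_preserves_pc {T X V : Type*} [Fintype T] (τ : TxnTrace T X V)
    (hwf : τ.WellFormed) (h : τ.IsPC) : τ.split.IsPC :=
  (split_preserves_pc_general τ hwf h).isPC
end

section
/- A PC trace is SI if and only if every happens-before cycle contains two successive cf dependencies: for a trace τ over (T,X,V) that is PC, τ is SI if and only if the transitive closure of (po ∪ rf ∪ sto) ∪ ((po ∪ rf ∪ sto) ; cf) is irreflexive. (Trace-level content of Theorem 2 of the paper.) -/
open scoped Classical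

/-!
For a well-formed trace, RetVal amounts to `rf ⊆ vis` together with the absence of pairs
`(c, b) ∈ cf` with `(b, c) ∈ vis`. Once `arb` is fixed, the least relation containing `arb0` and
satisfying Prefix is `arb^= ; arb0`, where `arb^=` is the reflexive closure; it is the best choice
of `vis`, because RetVal then only forbids visibility. As `arb` is total, this choice meets the
condition on `cf` exactly when `arb0 ; cf ⊆ arb`. Hence a trace is SI iff `arb0 ∪ arb0 ; cf`
extends to a strict total order, that is, iff this relation is acyclic.
-/

section Relations

variable {α : Type*} {r s vis arb : α → α → Prop}

theorem transGen_le_iff [IsTrans α s] : Relation.TransGen r ≤ s ↔ r ≤ s :=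
  ⟨fun h a b hab => h a b (.single hab), Relation.transGen_minimal⟩

theorem not_reflGen_iff [Std.Asymm r] [Std.Trichotomous r] {a b : α} :
    ¬ Relation.ReflGen r b a ↔ r a b := by
  rw [Relation.reflGen_iff]
  constructor
  · intro h
    rcases trichotomous_of r a b with hab | hab | hba
    · exact hab
    · exact absurd (Or.inl hab) h
    · exact absurd (Or.inr hba) h
  · rintro hab (rfl | hba)
    · exact irrefl_of r _ hab
    · exact asymm_of r hab hba

theorem exists_isStrictTotalOrder_ge_of_acyclic (h : ∀ a, ¬ Relation.TransGen r a a) :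
    ∃ s, IsStrictTotalOrder α s ∧ r ≤ s := by
  have : IsStrictOrder α (Relation.TransGen r) := { irrefl := h }
  let _ : PartialOrder α := partialOrderOfSO (Relation.TransGen r)
  have hmono : StrictMono (toLinearExtension (α := α)) :=
    toLinearExtension.monotone.strictMono_of_injective Function.injective_id
  exact ⟨fun a b => toLinearExtension a < toLinearExtension b,
    (RelEmbedding.preimage ⟨toLinearExtension, Function.injective_id⟩ (· < ·)).isStrictTotalOrder,
    fun _ _ hab => hmono (Relation.TransGen.single hab)⟩

theorem exists_isStrictTotalOrder_ge_iff_acyclic :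
    (∃ s, IsStrictTotalOrder α s ∧ r ≤ s) ↔ ∀ a, ¬ Relation.TransGen r a a := by
  refine ⟨?_, exists_isStrictTotalOrder_ge_of_acyclic⟩
  rintro ⟨s, _, hrs⟩ a haa
  exact irrefl_of s a (transGen_le_iff.2 hrs a a haa)

theorem strictPartialRel_iff : StrictPartialRel r ↔ IsStrictOrder α r :=
  ⟨fun ⟨hirrefl, htrans⟩ => { irrefl := hirrefl, trans := htrans },
    fun _ => ⟨irrefl_of r, fun _ _ _ => trans_of r⟩⟩

theorem strictTotalRel_iff : StrictTotalRel r ↔ IsStrictTotalOrder α r := by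
  rw [StrictTotalRel, strictPartialRel_iff]
  constructor
  · rintro ⟨_, htotal⟩
    exact { trichotomous := fun a b hab hba => by_contra fun hne => (htotal a b hne).elim hab hba }
  · intro _
    refine ⟨inferInstance, fun a b hne => ?_⟩
    exact (trichotomous_of r a b).imp_right fun h => h.resolve_left hne

theorem goodPair_iff :
    GoodPair vis arb ↔ IsStrictOrder α vis ∧ IsStrictTotalOrder α arb ∧ vis ≤ arb := by
  rw [GoodPair, strictPartialRel_iff, strictTotalRel_iff]
  exact Iff.rfl

theorem PrefixAx.goodPair [IsStrictTotalOrder α arb] (h : PrefixAx vis arb) (hle : vis ≤ arb) :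
    GoodPair vis arb :=
  goodPair_iff.2
    ⟨{ irrefl := fun a ha => irrefl_of arb a (hle a a ha)
       trans := fun a b c hab => h a b c (hle a b hab) }, inferInstance, hle⟩

/-- The composition `arb^= ; r`, where `arb^=` is the reflexive closure of `arb`. For transitive
`arb` it is the least relation containing `r` and satisfying Prefix with respect to `arb`. -/
def prefixClosure (arb r : α → α → Prop) : α → α → Prop :=
  Relation.Comp (Relation.ReflGen arb) r

theorem le_prefixClosure : r ≤ prefixClosure arb r :=
  fun a _ hab => ⟨a, .refl, hab⟩

theorem prefixAx_prefixClosure [IsTrans α arb] : PrefixAx (prefixClosure arb r) arb := by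
  rintro a b c hab ⟨d, hbd, hdc⟩
  refine ⟨d, .single ?_, hdc⟩
  cases hbd with
  | refl => exact hab
  | single hbd => exact trans_of arb hab hbd

theorem PrefixAx.prefixClosure_le (h : PrefixAx vis arb) (hle : r ≤ vis) :
    prefixClosure arb r ≤ vis := by
  rintro a c ⟨b, hab, hbc⟩
  cases hab with
  | refl => exact hle a c hbc
  | single hab => exact h a b c hab (hle b c hbc)

theorem prefixClosure_le_of_le [IsTrans α arb] (hle : r ≤ arb) : prefixClosure arb r ≤ arb :=
  PrefixAx.prefixClosure_le (fun _ _ _ => trans_of arb) hle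

theorem comp_le_iff_not_prefixClosure [Std.Asymm arb] [Std.Trichotomous arb] :
    Relation.Comp r s ≤ arb ↔ ∀ c b, s c b → ¬ prefixClosure arb r b c := by
  constructor
  · rintro h c b hcb ⟨a, hba, hac⟩
    exact not_reflGen_iff.2 (h a b ⟨c, hac, hcb⟩) hba
  · rintro h a b ⟨c, hac, hcb⟩
    exact not_reflGen_iff.1 fun hba => h c b hcb ⟨a, hba, hac⟩

end Relations

namespace TxnTrace

variable {T X V : Type*} {τ : TxnTrace T X V} {vis arb : T → T → Prop}

theorem arb0_eq_sup : τ.arb0 = τ.vis0 ⊔ τ.stoR := by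
  funext a b
  exact propext or_assoc.symm

theorem WellFormed.eq_of_rf (hwf : τ.WellFormed) {x : X} {t w w' : T} (h : τ.rf x w t)
    (h' : τ.rf x w' t) : w = w' :=
  (hwf.rf_total t x (hwf.rf_wf x w t h).2.1).unique h h'

theorem RetVal.rfR_le (hwf : τ.WellFormed) (hret : τ.RetVal vis arb) : τ.rfR ≤ vis := by
  rintro w t ⟨x, hrf⟩
  obtain ⟨w', ⟨hvis, _⟩, _, hrf'⟩ := hret t x (hwf.rf_wf x w t hrf).2.1
  exact hwf.eq_of_rf hrf hrf' ▸ hvis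

theorem RetVal.not_vis_of_cf [Std.Asymm arb] (hwf : τ.WellFormed) (hret : τ.RetVal vis arb)
    (hsto : τ.stoR ≤ arb) {c b : T} (hcf : τ.cf c b) : ¬ vis b c := by
  obtain ⟨_, x, w, hrf, hwb⟩ := hcf
  intro hvis
  obtain ⟨w', _, hmax, hrf'⟩ := hret c x (hwf.rf_wf x w c hrf).2.1
  obtain rfl : w = w' := hwf.eq_of_rf hrf hrf'
  have hne : b ≠ w := by
    rintro rfl
    exact hwf.sto_irrefl x b hwb
  have hbw : arb b w := hmax b hvis (hwf.sto_dom x w b hwb).2 hne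
  exact asymm_of arb hbw (hsto w b ⟨x, hwb⟩)

theorem retVal_of_cf [Std.Irrefl vis] (hwf : τ.WellFormed) (hsto : τ.stoR ≤ arb)
    (hrf : τ.rfR ≤ vis) (hcf : ∀ c b, τ.cf c b → ¬ vis b c) : τ.RetVal vis arb := by
  intro t x hx
  obtain ⟨w, hwt, _⟩ := hwf.rf_total t x hx
  have hxw : x ∈ τ.WS w := (hwf.rf_wf x w t hwt).2.2.1
  refine ⟨w, ⟨hrf w t ⟨x, hwt⟩, hxw⟩, fun t' hvis hxt' hne => ?_, hwt⟩
  rcases hwf.sto_total x t' w hxt' hxw hne with h | h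
  · exact hsto t' w ⟨x, h⟩
  · exact absurd hvis (hcf t t' ⟨(ne_of_irrefl hvis).symm, x, w, hwt, h⟩)

theorem retVal_iff [Std.Irrefl vis] [Std.Asymm arb] (hwf : τ.WellFormed) (hsto : τ.stoR ≤ arb) :
    τ.RetVal vis arb ↔ τ.rfR ≤ vis ∧ ∀ c b, τ.cf c b → ¬ vis b c :=
  ⟨fun hret => ⟨hret.rfR_le hwf, fun _ _ => hret.not_vis_of_cf hwf hsto⟩,
    fun ⟨hrf, hcf⟩ => retVal_of_cf hwf hsto hrf hcf⟩

theorem isSI_iff_exists_vis (hwf : τ.WellFormed) :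
    τ.IsSI ↔ ∃ vis arb, GoodPair vis arb ∧ PrefixAx vis arb ∧ τ.arb0 ≤ vis ∧
      ∀ c b, τ.cf c b → ¬ vis b c := by
  constructor
  · rintro ⟨vis, arb, hgood, hpoco, -, hret, hpre, hconflict⟩
    obtain ⟨_, _, hle⟩ := goodPair_iff.1 hgood
    have harb0 : τ.arb0 ≤ vis := arb0_eq_sup.trans_le (sup_le (transGen_le_iff.1 hpoco) hconflict)
    have hsto : τ.stoR ≤ arb := le_trans hconflict hle
    exact ⟨vis, arb, hgood, hpre, harb0, ((retVal_iff hwf hsto).1 hret).2⟩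
  · rintro ⟨vis, arb, hgood, hpre, harb0, hcf⟩
    obtain ⟨_, _, hle⟩ := goodPair_iff.1 hgood
    obtain ⟨hvis0, hsto⟩ : τ.vis0 ≤ vis ∧ τ.stoR ≤ vis := sup_le_iff.1 (arb0_eq_sup.ge.trans harb0)
    have hrf : τ.rfR ≤ vis := fun a b hab => hvis0 a b (.inr hab)
    exact ⟨vis, arb, hgood, transGen_le_iff.2 hvis0, transGen_le_iff.2 (harb0.trans hle),
      (retVal_iff hwf (hsto.trans hle)).2 ⟨hrf, hcf⟩, hpre, hsto⟩

theorem isSI_iff_exists_arb (hwf : τ.WellFormed) :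
    τ.IsSI ↔ ∃ arb, IsStrictTotalOrder T arb ∧ τ.arb0 ⊔ Relation.Comp τ.arb0 τ.cf ≤ arb := by
  rw [isSI_iff_exists_vis hwf]
  constructor
  · rintro ⟨vis, arb, hgood, hpre, harb0, hcf⟩
    obtain ⟨_, _, hle⟩ := goodPair_iff.1 hgood
    have hcomp : Relation.Comp τ.arb0 τ.cf ≤ arb := comp_le_iff_not_prefixClosure.2
      fun c b hcb hvis => hcf c b hcb (hpre.prefixClosure_le harb0 b c hvis)
    exact ⟨arb, inferInstance, sup_le (harb0.trans hle) hcomp⟩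
  · rintro ⟨arb, _, hle⟩
    obtain ⟨harb0, hcomp⟩ := sup_le_iff.1 hle
    exact ⟨prefixClosure arb τ.arb0, arb,
      prefixAx_prefixClosure.goodPair (prefixClosure_le_of_le harb0), prefixAx_prefixClosure,
      le_prefixClosure, comp_le_iff_not_prefixClosure.1 hcomp⟩

end TxnTrace

theorem pc_si_iff_no_bad_cycle_general {T X V : Type*} (τ : TxnTrace T X V)
    (hwf : τ.WellFormed) :
    τ.IsSI ↔
      ∀ t, ¬ Relation.TransGen
        (fun a b => τ.arb0 a b ∨ ∃ c, τ.arb0 a c ∧ τ.cf c b) t t :=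
  (TxnTrace.isSI_iff_exists_arb hwf).trans exists_isStrictTotalOrder_ge_iff_acyclic

/-- trace-level content of Theorem 2: a PC trace is SI iff
`((po ∪ rf ∪ sto) ∪ (po ∪ rf ∪ sto);cf)⁺` is irreflexive. -/
theorem pc_si_iff_no_bad_cycle {T X V : Type*} [Fintype T] (τ : TxnTrace T X V)
    (hwf : τ.WellFormed) (hpc : τ.IsPC) :
    τ.IsSI ↔
      ∀ t, ¬ Relation.TransGen
        (fun a b => τ.arb0 a b ∨ ∃ c, τ.arb0 a c ∧ τ.cf c b) t t :=
  pc_si_iff_no_bad_cycle_general τ hwf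
end
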